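/- Let n, r be integers with r ≥ 3 and 2r + 2 < n. Set S = {2, 3, …, 2r−2} and S₀ = {2, 3, …, r−1}, and define F₁ = {{1} ∪ G : G an (r−1)-element subset of S}, F₂ = {{1, i} ∪ H : 2r−1 ≤ i ≤ n, H an (r−2)-element subset of S with H ≠ S₀}, F₃ = the family of all r-element subsets of S, F₄ = {(S \ S₀) ∪ {i} : 2r−1 ≤ i ≤ n}, and F = F₁ ∪ F₂ ∪ F₃ ∪ F₄. Then the degree of the element 1 in F equals binom(2r−3, r−1) + (binom(2r−3, r−2) − 1)(n − 2r + 2), and for every i with 2r−1 ≤ i ≤ n the degree of i in F equals binom(2r−3, r−2). -/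

import Mathlib

/-- The degree of `x` in the family `F`: the number of members of `F` containing `x`. -/
def degree (F : Finset (Finset ℕ)) (x : ℕ) : ℕ := (F.filter (fun A => x ∈ A)).card

/-- `F` is an intersecting family: any two members have nonempty intersection. -/
def IsIntersecting (F : Finset (Finset ℕ)) : Prop :=
  ∀ A ∈ F, ∀ B ∈ F, (A ∩ B).Nonempty

/-- `F` is a family of `r`-element subsets of `[n] = {1,…,n}`. -/
def IsFamily (n r : ℕ) (F : Finset (Finset ℕ)) : Prop :=
  ∀ A ∈ F, A ⊆ Finset.Icc 1 n ∧ A.card = r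

/-- `F` is a maximal intersecting family of `r`-subsets of `[n]`: it is intersecting and
every `r`-subset of `[n]` not in `F` is disjoint from some member of `F`. -/
def IsMaxIntersecting (n r : ℕ) (F : Finset (Finset ℕ)) : Prop :=
  IsIntersecting F ∧
    ∀ G : Finset ℕ, G ⊆ Finset.Icc 1 n → G.card = r → G ∉ F → ∃ A ∈ F, A ∩ G = ∅

/-- `∪F = [n]`: every element of `[n]` lies in some member of `F`. -/
def Covers (n : ℕ) (F : Finset (Finset ℕ)) : Prop :=
  ∀ x ∈ Finset.Icc 1 n, ∃ A ∈ F, x ∈ A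

/-- `Δ(F)`: the maximum degree over `x ∈ [n]`. -/
noncomputable def maxDeg (n : ℕ) (F : Finset (Finset ℕ)) : ℕ :=
  sSup (degree F '' Set.Icc 1 n)

/-- `δ(F)`: the minimum degree over `x ∈ [n]`. -/
noncomputable def minDeg (n : ℕ) (F : Finset (Finset ℕ)) : ℕ :=
  sInf (degree F '' Set.Icc 1 n)

/-- `S = {2, …, 2r−2}`. -/
def Sset (r : ℕ) : Finset ℕ := Finset.Icc 2 (2 * r - 2)

/-- `S₀ = {2, …, r−1}`. -/
def S0set (r : ℕ) : Finset ℕ := Finset.Icc 2 (r - 1)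

/-- `F₁ = {{1} ∪ G : G ∈ binom(S, r−1)}`. -/
def Fam1 (r : ℕ) : Finset (Finset ℕ) :=
  ((Sset r).powersetCard (r - 1)).image (fun G => insert 1 G)

/-- `F₂ = {{1, i} ∪ H : 2r−1 ≤ i ≤ n, H ∈ binom(S, r−2), H ≠ S₀}`. -/
def Fam2 (n r : ℕ) : Finset (Finset ℕ) :=
  ((Finset.Icc (2 * r - 1) n) ×ˢ
      (((Sset r).powersetCard (r - 2)).filter (fun H => H ≠ S0set r))).image
    (fun p => insert 1 (insert p.1 p.2))

/-- `F₃ = binom(S, r)`. -/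
def Fam3 (r : ℕ) : Finset (Finset ℕ) := (Sset r).powersetCard r

/-- `F₄ = {(S \ S₀) ∪ {i} : 2r−1 ≤ i ≤ n}`. -/
def Fam4 (n r : ℕ) : Finset (Finset ℕ) :=
  (Finset.Icc (2 * r - 1) n).image (fun i => insert i (Sset r \ S0set r))

/-- `F = F₁ ∪ F₂ ∪ F₃ ∪ F₄`. -/
def FamConstr (n r : ℕ) : Finset (Finset ℕ) := Fam1 r ∪ Fam2 n r ∪ Fam3 r ∪ Fam4 n r

lemma aux_notMem {r x : ℕ} {H : Finset ℕ} (hH : H ⊆ Sset r) (hx : x = 1 ∨ 2 * r - 1 ≤ x)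
    (hr : 3 ≤ r) : x ∉ H := by
  intro h
  have := hH h
  simp only [Sset, Finset.mem_Icc] at this
  omega

lemma aux_cardS {r : ℕ} (hr : 3 ≤ r) : (Sset r).card = 2 * r - 3 := by
  simp only [Sset, Nat.card_Icc]; omega

lemma aux_cardH {r : ℕ} (hr : 3 ≤ r) :
    (((Sset r).powersetCard (r - 2)).filter (fun H => H ≠ S0set r)).card =
      Nat.choose (2 * r - 3) (r - 2) - 1 := by
  rw [Finset.filter_ne', Finset.card_erase_of_mem, Finset.card_powersetCard, aux_cardS hr]
  rw [Finset.mem_powersetCard]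
  constructor
  · intro x hx
    simp only [S0set, Sset, Finset.mem_Icc] at *
    omega
  · simp only [S0set, Nat.card_Icc]; omega

lemma aux_insert_inj {x : ℕ} {A B : Finset ℕ} (hA : x ∉ A) (hB : x ∉ B)
    (h : insert x A = insert x B) : A = B := by
  rw [← Finset.erase_insert hA, h, Finset.erase_insert hB]

lemma aux_double {r i : ℕ} {A B : Finset ℕ} (hr : 3 ≤ r) (hi : 2 * r - 1 ≤ i)
    (hA : A ⊆ Sset r) (hB : B ⊆ Sset r)
    (h : insert 1 (insert i A) = insert 1 (insert i B)) : A = B := by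
  have h1 : (1 : ℕ) ≠ i := by omega
  refine aux_insert_inj (aux_notMem hA (Or.inr hi) hr) (aux_notMem hB (Or.inr hi) hr)
    (aux_insert_inj ?_ ?_ h)
  · simp [h1, aux_notMem hA (Or.inl rfl) hr]
  · simp [h1, aux_notMem hB (Or.inl rfl) hr]

/-- In `F = F₁ ∪ F₂ ∪ F₃ ∪ F₄` the degree of `1` is
`C(2r−3, r−1) + (C(2r−3, r−2) − 1)(n − 2r + 2)` and the degree of each `i` with
`2r−1 ≤ i ≤ n` is `C(2r−3, r−2)`. -/
theorem famConstr_degrees (n r : ℕ) (hr : 3 ≤ r) (hn : 2 * r + 2 < n) :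
    degree (FamConstr n r) 1 =
      Nat.choose (2 * r - 3) (r - 1) +
        (Nat.choose (2 * r - 3) (r - 2) - 1) * (n - 2 * r + 2) ∧
    ∀ i : ℕ, 2 * r - 1 ≤ i → i ≤ n →
      degree (FamConstr n r) i = Nat.choose (2 * r - 3) (r - 2) := by
  constructor
  · have key : (FamConstr n r).filter (fun A => 1 ∈ A) = Fam1 r ∪ Fam2 n r := by
      ext A
      simp only [FamConstr, Finset.mem_filter, Finset.mem_union]
      constructor
      · rintro ⟨((h | h) | h) | h, h1⟩
        · exact Or.inl h
        · exact Or.inr h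
        · exact absurd h1 (aux_notMem (Finset.mem_powersetCard.1 h).1 (Or.inl rfl) hr)
        · obtain ⟨i, hi, rfl⟩ := Finset.mem_image.1 h
          rw [Finset.mem_Icc] at hi
          rcases Finset.mem_insert.1 h1 with h2 | h2
          · omega
          · exact absurd h2 (aux_notMem Finset.sdiff_subset (Or.inl rfl) hr)
      · rintro (h | h)
        · refine ⟨Or.inl (Or.inl (Or.inl h)), ?_⟩
          obtain ⟨G, _, rfl⟩ := Finset.mem_image.1 h
          simp
        · refine ⟨Or.inl (Or.inl (Or.inr h)), ?_⟩
          obtain ⟨G, _, rfl⟩ := Finset.mem_image.1 h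
          simp
    have disj : Disjoint (Fam1 r) (Fam2 n r) := by
      rw [Finset.disjoint_left]
      intro A h1 h2
      obtain ⟨G, hG, rfl⟩ := Finset.mem_image.1 h1
      obtain ⟨⟨i, H⟩, hp, he⟩ := Finset.mem_image.1 h2
      simp only [Finset.mem_product, Finset.mem_Icc] at hp
      have hi : i ∈ insert 1 G := by rw [← he]; simp
      rcases Finset.mem_insert.1 hi with h | h
      · omega
      · exact aux_notMem (Finset.mem_powersetCard.1 hG).1 (Or.inr hp.1.1) hr h
    have c1 : (Fam1 r).card = Nat.choose (2 * r - 3) (r - 1) := by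
      rw [Fam1, Finset.card_image_of_injOn, Finset.card_powersetCard, aux_cardS hr]
      intro A hA B hB h
      have hA' := (Finset.mem_powersetCard.1 (Finset.mem_coe.1 hA)).1
      have hB' := (Finset.mem_powersetCard.1 (Finset.mem_coe.1 hB)).1
      exact aux_insert_inj (aux_notMem hA' (Or.inl rfl) hr) (aux_notMem hB' (Or.inl rfl) hr) h
    have c2 : (Fam2 n r).card =
        (Nat.choose (2 * r - 3) (r - 2) - 1) * (n - 2 * r + 2) := by
      rw [Fam2, Finset.card_image_of_injOn, Finset.card_product, aux_cardH hr, Nat.card_Icc,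
        mul_comm]
      · congr 1; omega
      · rintro ⟨i, A⟩ hA ⟨j, B⟩ hB h
        simp only [Finset.mem_coe, Finset.mem_product, Finset.mem_Icc, Finset.mem_filter,
          Finset.mem_powersetCard] at hA hB h
        have hij : i = j := by
          have hi : i ∈ insert 1 (insert j B) := by rw [← h]; simp
          rcases Finset.mem_insert.1 hi with h | h
          · omega
          rcases Finset.mem_insert.1 h with h | h
          · exact h
          · exact absurd h (aux_notMem hB.2.1.1 (Or.inr hA.1.1) hr)
        subst hij
        rw [aux_double hr hA.1.1 hA.2.1.1 hB.2.1.1 h]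
    rw [degree, key, Finset.card_union_of_disjoint disj, c1, c2]
  · intro i hi hin
    have key : (FamConstr n r).filter (fun A => i ∈ A) =
        insert (insert i (Sset r \ S0set r))
          ((((Sset r).powersetCard (r - 2)).filter (fun H => H ≠ S0set r)).image
            (fun H => insert 1 (insert i H))) := by
      ext A
      simp only [FamConstr, Finset.mem_filter, Finset.mem_union, Finset.mem_insert]
      constructor
      · rintro ⟨((h | h) | h) | h, h1⟩
        · obtain ⟨G, hG, rfl⟩ := Finset.mem_image.1 h
          rcases Finset.mem_insert.1 h1 with h | h
          · omega
          · exact absurd h (aux_notMem (Finset.mem_powersetCard.1 hG).1 (Or.inr hi) hr)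
        · obtain ⟨⟨j, H⟩, hp, rfl⟩ := Finset.mem_image.1 h
          rw [Finset.mem_product] at hp
          have hH := (Finset.mem_powersetCard.1 (Finset.mem_filter.1 hp.2).1).1
          simp only [Finset.mem_insert] at h1
          rcases h1 with h | h | h
          · omega
          · subst h
            exact Or.inr (Finset.mem_image.2 ⟨H, hp.2, rfl⟩)
          · exact absurd h (aux_notMem hH (Or.inr hi) hr)
        · exact absurd h1 (aux_notMem (Finset.mem_powersetCard.1 h).1 (Or.inr hi) hr)
        · obtain ⟨j, hj, rfl⟩ := Finset.mem_image.1 h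
          rcases Finset.mem_insert.1 h1 with h2 | h2
          · subst h2
            exact Or.inl rfl
          · exact absurd h2 (aux_notMem Finset.sdiff_subset (Or.inr hi) hr)
      · have hI : i ∈ Finset.Icc (2 * r - 1) n := Finset.mem_Icc.2 ⟨hi, hin⟩
        rintro (rfl | h)
        · exact ⟨Or.inr (Finset.mem_image.2 ⟨i, hI, rfl⟩), Finset.mem_insert_self _ _⟩
        · obtain ⟨H, hH, rfl⟩ := Finset.mem_image.1 h
          refine ⟨Or.inl (Or.inl (Or.inr (Finset.mem_image.2
            ⟨(i, H), Finset.mem_product.2 ⟨hI, hH⟩, rfl⟩))), ?_⟩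
          simp
    rw [degree, key, Finset.card_insert_of_notMem, Finset.card_image_of_injOn, aux_cardH hr]
    · have : 0 < Nat.choose (2 * r - 3) (r - 2) := Nat.choose_pos (by omega)
      omega
    · intro A hA B hB h
      simp only [Finset.mem_coe, Finset.mem_filter, Finset.mem_powersetCard] at hA hB
      exact aux_double hr hi hA.1.1 hB.1.1 h
    · intro h
      obtain ⟨H, _, he⟩ := Finset.mem_image.1 h
      have h1 : (1 : ℕ) ∈ insert i (Sset r \ S0set r) := by rw [← he]; simp
      rcases Finset.mem_insert.1 h1 with h2 | h2
      · omega
      · exact absurd h2 (aux_notMem Finset.sdiff_subset (Or.inl rfl) hr)
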